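/- Let w be a valid chipsplitting outcome whose positive support supp⁺(w) has exactly 4 elements. Then deg(w) ≤ 5, i.e., every (i,j) ∈ supp(w) satisfies i + j ≤ 5. -/

import Mathlib

/-- The splitting-move vector at a grid point `p = (i,j)`:
`δ_{(i+1,j)} + δ_{(i,j+1)} − δ_{(i,j)}`. -/
noncomputable def splitMove (p : ℕ × ℕ) : (ℕ × ℕ) →₀ ℤ :=
  Finsupp.single (p.1 + 1, p.2) 1 + Finsupp.single (p.1, p.2 + 1) 1 - Finsupp.single p 1

/-- A chip configuration is a chipsplitting outcome if it lies in the additive subgroup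
generated by all splitting-move vectors. -/
def IsOutcome (w : (ℕ × ℕ) →₀ ℤ) : Prop :=
  w ∈ AddSubgroup.closure (Set.range splitMove)

/-- A chip configuration is valid if its negative support is contained in `{(0,0)}`. -/
def IsValid (w : (ℕ × ℕ) →₀ ℤ) : Prop :=
  ∀ p : ℕ × ℕ, w p < 0 → p = (0, 0)

/-!
Record a family of splitting numbers `v` by the polynomials
`V_k(X) = ∑_{i + j = k} (-1)^j v(i,j) X^i`, and its outcome `w` likewise by polynomials `W_k`.
Splitting a chip at `(i,j)` adds `(-1)^j X^(i+1) + (-1)^(j+1) X^i = (X - 1) (-1)^j X^i` to the next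
degree, so `W_{k+1} = (X - 1) V_k - V_{k+1}`. By Descartes' rule of signs, multiplication by `X - 1`
creates a sign variation, whereas subtracting `W_{k+1}` destroys at most two for each of its terms.
Let `n` be the first degree with `V_n = 0`. Then `W_n = (X - 1) V_{n-1}` has at least `n` sign
variations minus twice the number of terms of `W_1, …, W_{n-1}`, but fewer than it has terms, and it
has at least two terms; hence `n + 3` is at most twice the total number of terms. When `w` is valid,
evaluation at `X = -1` shows that the row sums of `v` are nonnegative and remain zero from the first
zero on, so `w` has degree at most `n`. The resulting bound `deg w + 3 ≤ 2 |supp⁺ w|` is that of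
D'Angelo, Kos and Riehl for monomial maps between balls.
-/

open Polynomial Finset.HasAntidiagonal

theorem eq_neg_or_eq_neg_of_eq_neg :
    ∀ {a b c : SignType}, a ≠ 0 → b ≠ 0 → a = -c → a = -b ∨ b = -c := by
  decide

section SignVariations

variable {R : Type*} [Semiring R]

theorem natDegree_erase_of_ne_natDegree {P : R[X]} {n : ℕ} (hn : n ≠ P.natDegree) :
    (P.erase n).natDegree = P.natDegree := by
  rcases eq_or_ne P 0 with rfl | hP
  · simp
  · refine natDegree_eq_of_le_of_coeff_ne_zero (natDegree_le_natDegree (degree_erase_le P n)) ?_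
    rwa [erase_ne _ hn.symm, coeff_natDegree, leadingCoeff_ne_zero]

theorem leadingCoeff_erase_of_ne_natDegree {P : R[X]} {n : ℕ} (hn : n ≠ P.natDegree) :
    (P.erase n).leadingCoeff = P.leadingCoeff := by
  rw [leadingCoeff, natDegree_erase_of_ne_natDegree hn, erase_ne _ hn.symm, leadingCoeff]

theorem eraseLead_erase_of_ne_natDegree {P : R[X]} {n : ℕ} (hn : n ≠ P.natDegree) :
    (P.erase n).eraseLead = P.eraseLead.erase n := by
  ext m
  simp only [eraseLead_coeff, natDegree_erase_of_ne_natDegree hn, coeff_erase]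
  split_ifs <;> rfl

variable [LinearOrder R]

theorem signVariations_erase_le_and_le_erase_add_two (P : R[X]) (n : ℕ) :
    signVariations (P.erase n) ≤ signVariations P ∧
      signVariations P ≤ signVariations (P.erase n) + 2 := by
  induction hm : P.support.card generalizing P with
  | zero => simp_all
  | succ m ih =>
    rcases eq_or_ne n P.natDegree with rfl | hn
    · refine ⟨signVariations_eraseLead_le P, ?_⟩
      exact (signVariations_le_eraseLead_succ P).trans (Nat.le_succ _)
    have hP : P ≠ 0 := by rintro rfl; simp at hm
    have hPn : P.erase n ≠ 0 := by
      rwa [← leadingCoeff_ne_zero, leadingCoeff_erase_of_ne_natDegree hn, leadingCoeff_ne_zero]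
    rw [signVariations_eq_eraseLead_add_ite hP, signVariations_eq_eraseLead_add_ite hPn,
      leadingCoeff_erase_of_ne_natDegree hn, eraseLead_erase_of_ne_natDegree hn]
    obtain ⟨hle, hge⟩ := ih P.eraseLead (card_support_eraseLead' hm)
    rcases ne_or_eq n P.eraseLead.natDegree with hn' | rfl
    · rw [leadingCoeff_erase_of_ne_natDegree hn']
      omega
    rcases eq_or_ne P.eraseLead 0 with h0 | h0
    · simp [h0]
    rw [signVariations_eq_eraseLead_add_ite h0]
    -- When the second term is deleted, a variation between its two neighbours already occurred
    -- between it and one of them.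
    have := eq_neg_or_eq_neg_of_eq_neg (a := SignType.sign P.leadingCoeff)
      (b := SignType.sign P.eraseLead.leadingCoeff)
      (c := SignType.sign P.eraseLead.eraseLead.leadingCoeff) (by simpa using hP)
      (by simpa using h0)
    rw [← eraseLead]
    grind

theorem signVariations_add_monomial_le (P : R[X]) (n : ℕ) (c : R) :
    signVariations (P + monomial n c) ≤ signVariations P + 2 := by
  have h : (P + monomial n c).erase n = P.erase n := by
    ext m
    simp only [coeff_erase, coeff_add, coeff_monomial]
    grind
  have hle := (signVariations_erase_le_and_le_erase_add_two (P + monomial n c) n).2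
  have hge := (signVariations_erase_le_and_le_erase_add_two P n).1
  rw [h] at hle
  omega

theorem signVariations_add_le_add_two_mul_card_support (P Q : R[X]) :
    signVariations (P + Q) ≤ signVariations P + 2 * Q.support.card := by
  induction hm : Q.support.card generalizing Q with
  | zero => simp_all
  | succ m ih =>
    have htail := ih Q.eraseLead (card_support_eraseLead' hm)
    have hlead := signVariations_add_monomial_le (P + Q.eraseLead) Q.natDegree Q.leadingCoeff
    rw [add_assoc, eraseLead_add_monomial_natDegree_leadingCoeff] at hlead
    omega

theorem signVariations_lt_card_support {P : R[X]} (hP : P ≠ 0) :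
    signVariations P < P.support.card := by
  induction hm : P.support.card generalizing P with
  | zero => simp_all
  | succ m ih =>
    rcases eq_or_ne P.eraseLead 0 with h | h
    · simp [signVariations_eq_eraseLead_add_ite hP, h, hP]
    · have htail := ih h (card_support_eraseLead' hm)
      have hlead := signVariations_le_eraseLead_succ P
      omega

end SignVariations

section Recurrence

variable {R : Type*} [Ring R] [LinearOrder R] [IsStrictOrderedRing R] {P Q : ℕ → R[X]}
  {η : R} {n : ℕ}

theorem signVariations_add_le_of_X_sub_C_mul_sub (hη : 0 < η)
    (hrec : ∀ k < n, Q (k + 1) = (X - C η) * Q k - P k) (hQ : ∀ k < n, Q k ≠ 0) :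
    signVariations (Q 0) + n ≤
      signVariations (Q n) + 2 * ∑ k ∈ Finset.range n, (P k).support.card := by
  induction n with
  | zero => simp
  | succ n ih =>
    have hprev := ih (fun k hk ↦ hrec k (by omega)) fun k hk ↦ hQ k (by omega)
    have hmul := succ_signVariations_le_X_sub_C_mul hη (hQ n n.lt_succ_self)
    have hsub := signVariations_add_le_add_two_mul_card_support (Q (n + 1)) (P n)
    rw [hrec n n.lt_succ_self, sub_add_cancel] at hsub
    rw [Finset.sum_range_succ, hrec n n.lt_succ_self]
    omega

theorem add_three_le_two_mul_sum_card_support (hη : 0 < η)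
    (hrec : ∀ k < n, Q (k + 1) = (X - C η) * Q k - P k) (hQ : ∀ k < n, Q k ≠ 0) (hn : n ≠ 0)
    (hQn : Q n = 0) :
    n + 3 ≤ 2 * ∑ k ∈ Finset.range n, (P k).support.card := by
  obtain ⟨n, rfl⟩ := Nat.exists_eq_succ_of_ne_zero hn
  have hPn : P n = (X - C η) * Q n := by
    rw [← sub_eq_zero, ← neg_eq_zero, neg_sub, ← hrec n n.lt_succ_self, hQn]
  have hQn_ne := hQ n n.lt_succ_self
  have hprev := signVariations_add_le_of_X_sub_C_mul_sub (n := n) hη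
    (fun k hk ↦ hrec k (by omega)) fun k hk ↦ hQ k (by omega)
  have hmul := succ_signVariations_le_X_sub_C_mul hη hQn_ne
  have hlt := signVariations_lt_card_support (mul_ne_zero (X_sub_C_ne_zero η) hQn_ne)
  rw [← hPn] at hmul hlt
  rw [Finset.sum_range_succ]
  omega

end Recurrence

/-- The degree-`k` part of a configuration `w`, encoded as the polynomial
`∑_{i + j = k} (-1)^j w(i,j) X^i`. The alternating signs make a splitting move in degree `k` act as
multiplication by `X - 1`, the form to which Descartes' rule of signs applies. -/
noncomputable def altRow (k : ℕ) : ((ℕ × ℕ) →₀ ℤ) →ₗ[ℤ] ℤ[X] :=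
  ∑ p ∈ antidiagonal k, monomial p.1 ∘ₗ ((-1 : ℤ) ^ p.2 • Finsupp.lapply p)

theorem altRow_apply (k : ℕ) (w : (ℕ × ℕ) →₀ ℤ) :
    altRow k w = ∑ p ∈ antidiagonal k, monomial p.1 ((-1) ^ p.2 * w p) := by
  simp only [altRow, LinearMap.sum_apply]
  rfl

theorem altRow_single (k : ℕ) (p : ℕ × ℕ) (c : ℤ) :
    altRow k (Finsupp.single p c) =
      if p.1 + p.2 = k then monomial p.1 ((-1) ^ p.2 * c) else 0 := by
  rw [altRow_apply]
  split_ifs with hp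
  · rw [Finset.sum_eq_single_of_mem p (mem_antidiagonal.2 hp)
      fun q _ hq ↦ by rw [Finsupp.single_eq_of_ne hq, mul_zero, monomial_zero_right],
      Finsupp.single_eq_same]
  · refine Finset.sum_eq_zero fun q hq ↦ ?_
    have hqp : q ≠ p := by rintro rfl; exact hp (mem_antidiagonal.1 hq)
    rw [Finsupp.single_eq_of_ne hqp, mul_zero, monomial_zero_right]

theorem altRow_zero (v : (ℕ × ℕ) →₀ ℤ) : altRow 0 v = C (v (0, 0)) := by
  simp [altRow_apply]

theorem card_support_altRow_le (k : ℕ) (w : (ℕ × ℕ) →₀ ℤ) :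
    (altRow k w).support.card ≤ {p ∈ w.support | p.1 + p.2 = k}.card := by
  have h : (altRow k w).support ⊆ {p ∈ w.support | p.1 + p.2 = k}.image Prod.fst := by
    intro i hi
    rw [mem_support_iff, altRow_apply, finsetSum_coeff] at hi
    obtain ⟨p, hp, hpi⟩ := Finset.exists_ne_zero_of_sum_ne_zero hi
    rw [coeff_monomial] at hpi
    grind [mem_antidiagonal]
  exact (Finset.card_le_card h).trans Finset.card_image_le

theorem exists_forall_ge_altRow_eq_zero (w : (ℕ × ℕ) →₀ ℤ) : ∃ n, ∀ k ≥ n, altRow k w = 0 := by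
  refine ⟨w.support.sup (fun p ↦ p.1 + p.2) + 1, fun k hk ↦ ?_⟩
  rw [altRow_apply]
  refine Finset.sum_eq_zero fun p hp ↦ ?_
  suffices w p = 0 by rw [this, mul_zero, monomial_zero_right]
  by_contra hwp
  have hle := Finset.le_sup (f := fun p ↦ p.1 + p.2) (Finsupp.mem_support_iff.2 hwp)
  have hpk := mem_antidiagonal.1 hp
  omega

/-- The total number of chips of `w` in degree `k`. -/
def rowSum (k : ℕ) (w : (ℕ × ℕ) →₀ ℤ) : ℤ :=
  ∑ p ∈ antidiagonal k, w p

theorem eval_neg_one_altRow (k : ℕ) (w : (ℕ × ℕ) →₀ ℤ) :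
    (altRow k w).eval (-1) = (-1) ^ k * rowSum k w := by
  rw [altRow_apply, eval_finsetSum, rowSum, Finset.mul_sum]
  refine Finset.sum_congr rfl fun p hp ↦ ?_
  rw [eval_monomial, ← mem_antidiagonal.1 hp, pow_add]
  ring

theorem rowSum_eq_zero_of_altRow_eq_zero {k : ℕ} {w : (ℕ × ℕ) →₀ ℤ} (h : altRow k w = 0) :
    rowSum k w = 0 := by
  have heval := eval_neg_one_altRow k w
  rw [h, eval_zero, zero_eq_mul] at heval
  exact heval.resolve_left (pow_ne_zero k (by norm_num))

/-- The configuration reached from the empty one when each point `p` is split `v p` times, where a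
negative `v p` stands for unsplitting. -/
noncomputable def outcomeOf : ((ℕ × ℕ) →₀ ℤ) →ₗ[ℤ] ((ℕ × ℕ) →₀ ℤ) :=
  Finsupp.linearCombination ℤ splitMove

theorem IsOutcome.exists_outcomeOf_eq {w : (ℕ × ℕ) →₀ ℤ} (hw : IsOutcome w) :
    ∃ v, outcomeOf v = w := by
  obtain ⟨v, rfl⟩ := AddSubgroup.exists_finsupp_of_mem_closure_range _ _ hw
  exact ⟨v, Finsupp.linearCombination_apply ℤ v⟩

theorem altRow_succ_splitMove (k : ℕ) (p : ℕ × ℕ) :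
    altRow (k + 1) (splitMove p) =
      (X - C 1) * altRow k (Finsupp.single p 1) - altRow (k + 1) (Finsupp.single p 1) := by
  have hdeg : p.1 + (p.2 + 1) = k + 1 ↔ p.1 + p.2 = k := by omega
  have hdeg' : p.1 + 1 + p.2 = k + 1 ↔ p.1 + p.2 = k := by omega
  simp only [splitMove, map_add, map_sub, altRow_single, hdeg, hdeg', sub_left_inj]
  split_ifs
  · simp only [← C_mul_X_pow_eq_monomial, pow_succ, map_mul, map_neg, map_one]
    ring
  · simp

theorem altRow_succ_outcomeOf (k : ℕ) (v : (ℕ × ℕ) →₀ ℤ) :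
    altRow (k + 1) (outcomeOf v) = (X - C 1) * altRow k v - altRow (k + 1) v := by
  suffices altRow (k + 1) ∘ₗ outcomeOf =
      LinearMap.mulLeft ℤ (X - C 1) ∘ₗ altRow k - altRow (k + 1) from LinearMap.congr_fun this v
  ext p : 2
  simpa [outcomeOf] using altRow_succ_splitMove k p

theorem outcomeOf_apply_zero (v : (ℕ × ℕ) →₀ ℤ) : outcomeOf v (0, 0) = -v (0, 0) := by
  suffices Finsupp.lapply (0, 0) ∘ₗ outcomeOf = -Finsupp.lapply (0, 0) from
    LinearMap.congr_fun this v
  ext p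
  simp [outcomeOf, splitMove]

theorem rowSum_succ_outcomeOf (k : ℕ) (v : (ℕ × ℕ) →₀ ℤ) :
    rowSum (k + 1) (outcomeOf v) = 2 * rowSum k v - rowSum (k + 1) v := by
  have h := congrArg (eval (-1)) (altRow_succ_outcomeOf k v)
  simp only [eval_sub, eval_mul, eval_X, eval_C, eval_neg_one_altRow] at h
  refine mul_left_cancel₀ (pow_ne_zero (k + 1) (neg_ne_zero.2 one_ne_zero) : (-1 : ℤ) ^ _ ≠ 0) ?_
  rw [h]
  ring

section IsValid

variable {v w : (ℕ × ℕ) →₀ ℤ} {p : ℕ × ℕ} {k : ℕ}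

theorem IsValid.nonneg_of_pos_degree (hw : IsValid w) (hp : 0 < p.1 + p.2) : 0 ≤ w p :=
  not_lt.1 fun h ↦ by simp [hw p h] at hp

theorem IsValid.nonneg_of_mem_antidiagonal_succ (hw : IsValid w)
    (hp : p ∈ antidiagonal (k + 1)) : 0 ≤ w p :=
  hw.nonneg_of_pos_degree (by have := mem_antidiagonal.1 hp; omega)

theorem IsValid.rowSum_succ_nonneg (hw : IsValid w) (k : ℕ) : 0 ≤ rowSum (k + 1) w :=
  Finset.sum_nonneg fun _ hp ↦ hw.nonneg_of_mem_antidiagonal_succ hp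

theorem IsValid.rowSum_nonneg (hv : IsValid (outcomeOf v)) (k : ℕ) : 0 ≤ rowSum k v := by
  obtain ⟨n, hn⟩ := exists_forall_ge_altRow_eq_zero v
  replace hn : ∀ k ≥ n, rowSum k v = 0 := fun k hk ↦ rowSum_eq_zero_of_altRow_eq_zero (hn k hk)
  rcases le_total n k with h | h
  · exact (hn k h).ge
  · induction h using Nat.decreasingInduction with
    | self => exact (hn n le_rfl).ge
    | of_succ k _ ih =>
      have hnonneg := hv.rowSum_succ_nonneg k
      have hrec := rowSum_succ_outcomeOf k v
      omega

theorem IsValid.rowSum_eq_zero_of_le (hv : IsValid (outcomeOf v)) {n : ℕ} (hk : rowSum k v = 0)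
    (hkn : k ≤ n) : rowSum n v = 0 := by
  induction n, hkn using Nat.le_induction with
  | base => exact hk
  | succ n _ ih =>
    have hsum := hv.rowSum_succ_nonneg n
    have hrec := rowSum_succ_outcomeOf n v
    have hnonneg := hv.rowSum_nonneg (n + 1)
    omega

theorem IsValid.outcomeOf_apply_eq_zero_of_lt (hv : IsValid (outcomeOf v)) (hk : rowSum k v = 0)
    (hp : k < p.1 + p.2) : outcomeOf v p = 0 := by
  obtain ⟨n, hn⟩ := Nat.exists_eq_succ_of_ne_zero (Nat.ne_zero_of_lt hp)
  have hsum : rowSum (n + 1) (outcomeOf v) = 0 := by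
    rw [rowSum_succ_outcomeOf, hv.rowSum_eq_zero_of_le hk (by omega : k ≤ n),
      hv.rowSum_eq_zero_of_le hk (by omega : k ≤ n + 1)]
    rfl
  exact (Finset.sum_eq_zero_iff_of_nonneg fun _ ↦ hv.nonneg_of_mem_antidiagonal_succ).1 hsum p
    (mem_antidiagonal.2 hn)

theorem IsValid.sum_card_support_altRow_succ_le (hw : IsValid w) (n : ℕ) :
    ∑ k ∈ Finset.range n, (altRow (k + 1) w).support.card ≤ {p | 0 < w p}.ncard := by
  have hfinite : {p | 0 < w p}.Finite :=
    w.support.finite_toSet.subset fun p hp ↦ Finsupp.mem_support_iff.2 hp.ne'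
  calc
    _ ≤ ∑ k ∈ Finset.range n, {p ∈ w.support | p.1 + p.2 = k + 1}.card :=
      Finset.sum_le_sum fun k _ ↦ card_support_altRow_le (k + 1) w
    _ = ((Finset.range n).biUnion fun k ↦ {p ∈ w.support | p.1 + p.2 = k + 1}).card := by
      refine (Finset.card_biUnion fun k _ l _ hkl ↦ ?_).symm
      exact Finset.disjoint_filter.2 fun p _ hk hl ↦ hkl (by omega)
    _ ≤ {p | 0 < w p}.ncard := by
      rw [← Set.ncard_coe_finset]
      refine Set.ncard_le_ncard (fun p hp ↦ ?_) hfinite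
      simp only [Finset.coe_biUnion, Set.mem_iUnion, Finset.mem_coe, Finset.mem_filter,
        Finsupp.mem_support_iff] at hp
      obtain ⟨k, -, hp0, hpk⟩ := hp
      exact (hw.nonneg_of_pos_degree (by omega)).lt_of_ne' hp0

end IsValid

theorem stmt_1_general (w : (ℕ × ℕ) →₀ ℤ) (hw : IsOutcome w) (hv : IsValid w) :
    ∀ p : ℕ × ℕ, w p ≠ 0 → p.1 + p.2 + 3 ≤ 2 * {p : ℕ × ℕ | 0 < w p}.ncard := by
  intro p hp
  obtain ⟨v, rfl⟩ := hw.exists_outcomeOf_eq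
  obtain ⟨n, hn, hlt⟩ : ∃ n, altRow n v = 0 ∧ ∀ k < n, altRow k v ≠ 0 := by
    classical
    have h : ∃ n, altRow n v = 0 := (exists_forall_ge_altRow_eq_zero v).imp fun n h ↦ h n le_rfl
    exact ⟨Nat.find h, Nat.find_spec h, fun k ↦ Nat.find_min h⟩
  have hdeg : p.1 + p.2 ≤ n :=
    not_lt.1 fun h ↦ hp (hv.outcomeOf_apply_eq_zero_of_lt (rowSum_eq_zero_of_altRow_eq_zero hn) h)
  have hn0 : n ≠ 0 := by
    rintro rfl
    obtain rfl : p = (0, 0) := by ext <;> simp only <;> omega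
    rw [altRow_zero, C_eq_zero] at hn
    exact hp (by rw [outcomeOf_apply_zero, hn, neg_zero])
  have hterms := add_three_le_two_mul_sum_card_support
    (P := fun k ↦ altRow (k + 1) (outcomeOf v)) one_pos
    (fun k _ ↦ by rw [altRow_succ_outcomeOf, sub_sub_cancel]) hlt hn0 hn
  have hcard := hv.sum_card_support_altRow_succ_le n
  omega

theorem stmt_1 (w : (ℕ × ℕ) →₀ ℤ) (hw : IsOutcome w) (hv : IsValid w)
    (hcard : {p : ℕ × ℕ | 0 < w p}.ncard = 4) :
    ∀ p : ℕ × ℕ, w p ≠ 0 → p.1 + p.2 ≤ 5 := by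
  intro p hp
  have := stmt_1_general w hw hv p hp
  omega
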